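/- arXiv:2604.05752 — 4 statements merged into one kernel-verified Lean document; each statement's English description precedes it below -/
import Mathlib

section
/- Let D ⊆ ℝ × ℝ be open and φ : D → ℝ twice continuously differentiable, and let f be a solution of u' = φ(x,u) on an interval I. Then the function p_f(x) := ∂ᵤφ(x, f(x)) is differentiable on I and satisfies the identity p_f'(x) + p_f(x)² + 𝒦(x, f(x)) = 0 for all x ∈ I, where 𝒦 is the curvature of the ODE. -/
/-- Partial derivative of `φ` with respect to the second (dependent) variable `u`. -/
noncomputable def pderivU (φ : ℝ × ℝ → ℝ) (x u : ℝ) : ℝ :=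
  deriv (fun v => φ (x, v)) u

/-- Partial derivative of `φ` with respect to the first (independent) variable `x`. -/
noncomputable def pderivX (φ : ℝ × ℝ → ℝ) (x u : ℝ) : ℝ :=
  deriv (fun t => φ (t, u)) x

/-- Mixed second partial derivative `∂ₓ∂ᵤφ`. -/
noncomputable def pderivXU (φ : ℝ × ℝ → ℝ) (x u : ℝ) : ℝ :=
  deriv (fun t => pderivU φ t u) x

/-- Second partial derivative `∂ᵤ∂ᵤφ`. -/
noncomputable def pderivUU (φ : ℝ × ℝ → ℝ) (x u : ℝ) : ℝ :=
  deriv (fun v => pderivU φ x v) u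

/-- The curvature `𝒦(x,u) := −(∂ₓ∂ᵤφ(x,u) + (∂ᵤφ(x,u))² + φ(x,u)·∂ᵤ∂ᵤφ(x,u))`
of the ODE `u' = φ(x,u)`. -/
noncomputable def curvature (φ : ℝ × ℝ → ℝ) (x u : ℝ) : ℝ :=
  -(pderivXU φ x u + (pderivU φ x u) ^ 2 + φ (x, u) * pderivUU φ x u)

/-!
By definition of the curvature, `-(p_f² + 𝒦) = ∂ₓ∂ᵤφ + φ · ∂ᵤ∂ᵤφ` along the solution, which is the
derivative of `∂ᵤφ` in the direction `(1, φ)`, the tangent of the graph of `f`.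
As `φ` is `C²`, the function `∂ᵤφ` is Fréchet differentiable, so the claim is the chain rule for
`x ↦ ∂ᵤφ(x, f(x))`.
-/

section PartialDerivatives

variable {𝕜 E G : Type*} [NontriviallyNormedField 𝕜] [NormedAddCommGroup E] [NormedSpace 𝕜 E]
  [NormedAddCommGroup G] [NormedSpace 𝕜 G]

theorem hasDerivAt_comp_prodMk_left {F : 𝕜 × G → E} {F' : 𝕜 × G →L[𝕜] E} {x : 𝕜} {y : G}
    (hF : HasFDerivAt F F' (x, y)) : HasDerivAt (fun t => F (t, y)) (F' (1, 0)) x :=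
  hF.comp_hasDerivAt_of_eq x ((hasDerivAt_id' x).prodMk (hasDerivAt_const x y)) rfl

theorem hasDerivAt_comp_prodMk_right {F : G × 𝕜 → E} {F' : G × 𝕜 →L[𝕜] E} {y : G} {u : 𝕜}
    (hF : HasFDerivAt F F' (y, u)) : HasDerivAt (fun v => F (y, v)) (F' (0, 1)) u :=
  hF.comp_hasDerivAt_of_eq u ((hasDerivAt_const u y).prodMk (hasDerivAt_id' u)) rfl

theorem hasDerivWithinAt_comp_graph {F : 𝕜 × 𝕜 → E} {f : 𝕜 → 𝕜} {f' x : 𝕜} {s : Set 𝕜}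
    (hF : DifferentiableAt 𝕜 F (x, f x)) (hf : HasDerivWithinAt f f' s x) :
    HasDerivWithinAt (fun t => F (t, f t))
      (deriv (fun t => F (t, f x)) x + f' • deriv (fun v => F (x, v)) (f x)) s x := by
  set L := fderiv 𝕜 F (x, f x)
  have hL : HasFDerivAt F L (x, f x) := hF.hasFDerivAt
  have hgraph : HasDerivWithinAt (fun t => F (t, f t)) (L (1, f')) s x :=
    hL.comp_hasDerivWithinAt_of_eq x ((hasDerivWithinAt_id x s).prodMk hf) rfl
  have hsplit : L (1, f') = L (1, 0) + f' • L (0, 1) := by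
    rw [← map_smul, ← map_add]
    simp
  rwa [(hasDerivAt_comp_prodMk_left hL).deriv,
    (hasDerivAt_comp_prodMk_right hL).deriv, ← hsplit]

end PartialDerivatives

theorem pderivU_eq_fderiv {φ : ℝ × ℝ → ℝ} {p : ℝ × ℝ} (hφ : DifferentiableAt ℝ φ p) :
    pderivU φ p.1 p.2 = fderiv ℝ φ p (0, 1) :=
  (hasDerivAt_comp_prodMk_right hφ.hasFDerivAt).deriv

theorem contDiffAt_pderivU {φ : ℝ × ℝ → ℝ} {p : ℝ × ℝ} {m n : WithTop ℕ∞}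
    (hφ : ContDiffAt ℝ n φ p) (hmn : m + 1 ≤ n) :
    ContDiffAt ℝ m (fun q : ℝ × ℝ => pderivU φ q.1 q.2) p := by
  have hdiff : ∀ᶠ q in nhds p, DifferentiableAt ℝ φ q :=
    ((hφ.of_le (le_add_self.trans hmn)).eventually (by simp)).mono
      fun _ hq => hq.differentiableAt one_ne_zero
  exact ((hφ.fderiv_right hmn).clm_apply contDiffAt_const).congr_of_eventuallyEq
    (hdiff.mono fun _ hq => pderivU_eq_fderiv hq)

theorem stmt_0_general {φ : ℝ × ℝ → ℝ} {f : ℝ → ℝ} {I : Set ℝ} {x : ℝ}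
    (hφ : ContDiffAt ℝ 2 φ (x, f x)) (hf : HasDerivWithinAt f (φ (x, f x)) I x) :
    HasDerivWithinAt (fun t => pderivU φ t (f t))
      (-((pderivU φ x (f x)) ^ 2 + curvature φ x (f x))) I x := by
  have hp : DifferentiableAt ℝ (fun q : ℝ × ℝ => pderivU φ q.1 q.2) (x, f x) :=
    (contDiffAt_pderivU hφ one_add_one_eq_two.le).differentiableAt one_ne_zero
  have hchain : HasDerivWithinAt (fun t => pderivU φ t (f t))
      (pderivXU φ x (f x) + φ (x, f x) * pderivUU φ x (f x)) I x :=
    hasDerivWithinAt_comp_graph hp hf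
  have hcurvature : -((pderivU φ x (f x)) ^ 2 + curvature φ x (f x)) =
      pderivXU φ x (f x) + φ (x, f x) * pderivUU φ x (f x) := by
    rw [curvature]
    ring
  rwa [hcurvature]

/-- If `φ` is C² on an open set `D` and `f` solves `u' = φ(x,u)` on an
open interval `I`, then `p_f(x) := ∂ᵤφ(x, f(x))` is differentiable on `I` and satisfies
`p_f'(x) + p_f(x)² + 𝒦(x, f(x)) = 0`. -/
theorem stmt_0 (D : Set (ℝ × ℝ)) (hD : IsOpen D)
    (φ : ℝ × ℝ → ℝ) (hφ : ContDiffOn ℝ 2 φ D)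
    (I : Set ℝ) (hI : IsOpen I) (f : ℝ → ℝ)
    (hfD : ∀ x ∈ I, (x, f x) ∈ D)
    (hf : ∀ x ∈ I, HasDerivAt f (φ (x, f x)) x) :
    ∀ x ∈ I, HasDerivAt (fun t => pderivU φ t (f t))
      (-((pderivU φ x (f x)) ^ 2 + curvature φ x (f x))) x :=
  fun x hx => hasDerivWithinAt_univ.mp
    (stmt_0_general (hφ.contDiffAt (hD.mem_nhds (hfD x hx))) (hf x hx).hasDerivWithinAt)
end

section
/- Let D ⊆ ℝ × ℝ be open, φ : D → ℝ twice continuously differentiable, and κ : ℝ → ℝ a function. Suppose that for every solution f of u' = φ(x,u) on any open interval I, the function p_f(x) := ∂ᵤφ(x, f(x)) satisfies p_f'(x) + p_f(x)² + κ(x) = 0 on I. Then the curvature satisfies 𝒦(x,u) = κ(x) for all (x,u) ∈ D. -/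
/-!
Along a solution `f`, the chain rule turns the derivative of `p(x) = ∂ᵤφ(x, f x)` into
`∂ₓ∂ᵤφ + φ · ∂ᵤ∂ᵤφ`, so `p` solves the Riccati equation `p' + p² + 𝒦(x, f x) = 0`. If `p` also
solves `p' + p² + κ = 0`, then `𝒦 = κ` at every point of the graph of `f`. By Picard–Lindelöf, every
point of `D` lies on the graph of a solution.
-/

open Function Set
open scoped Topology

section PartialDerivatives

variable {g φ : ℝ × ℝ → ℝ} {x u : ℝ}

theorem pderivX_eq_fderiv (hg : DifferentiableAt ℝ g (x, u)) :
    pderivX g x u = fderiv ℝ g (x, u) (1, 0) :=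
  (hg.hasFDerivAt.comp_hasDerivAt x
    ((hasDerivAt_id x).prodMk (hasDerivAt_const x u))).deriv

theorem pderivU_eq_fderiv_s2 (hg : DifferentiableAt ℝ g (x, u)) :
    pderivU g x u = fderiv ℝ g (x, u) (0, 1) :=
  (hg.hasFDerivAt.comp_hasDerivAt u
    ((hasDerivAt_const u x).prodMk (hasDerivAt_id u))).deriv

theorem contDiffOn_uncurry_pderivU {D : Set (ℝ × ℝ)} {m n : WithTop ℕ∞} (hD : IsOpen D)
    (hφ : ContDiffOn ℝ n φ D) (hmn : m + 1 ≤ n) :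
    ContDiffOn ℝ m (uncurry (pderivU φ)) D := by
  have hdiff : DifferentiableOn ℝ φ D :=
    (hφ.of_le (le_add_self.trans hmn)).differentiableOn one_ne_zero
  exact ((hφ.fderiv_of_isOpen hD hmn).clm_apply contDiffOn_const).congr
    fun p hp ↦ pderivU_eq_fderiv_s2 (hdiff.differentiableAt (hD.mem_nhds hp))

theorem hasDerivAt_comp_graph {f : ℝ → ℝ} {f' : ℝ} (hg : DifferentiableAt ℝ g (x, f x))
    (hf : HasDerivAt f f' x) :
    HasDerivAt (fun t ↦ g (t, f t)) (pderivX g x (f x) + f' * pderivU g x (f x)) x := by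
  have hsplit : ((1 : ℝ), f') = (1, 0) + f' • (0, 1) := by simp
  have hchain := hg.hasFDerivAt.comp_hasDerivAt x ((hasDerivAt_id x).prodMk hf)
  rwa [hsplit, map_add, map_smul, smul_eq_mul, ← pderivX_eq_fderiv hg,
    ← pderivU_eq_fderiv_s2 hg] at hchain

theorem hasDerivAt_pderivU_along_solution {f : ℝ → ℝ}
    (hφ : DifferentiableAt ℝ (uncurry (pderivU φ)) (x, f x))
    (hf : HasDerivAt f (φ (x, f x)) x) :
    HasDerivAt (fun t ↦ pderivU φ t (f t))
      (-(pderivU φ x (f x) ^ 2 + curvature φ x (f x))) x := by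
  have hriccati : -(pderivU φ x (f x) ^ 2 + curvature φ x (f x)) =
      pderivXU φ x (f x) + φ (x, f x) * pderivUU φ x (f x) := by
    unfold curvature
    ring
  rw [hriccati]
  -- `pderivXU φ` and `pderivUU φ` unfold to the first partials of `uncurry (pderivU φ)`.
  exact hasDerivAt_comp_graph hφ hf

end PartialDerivatives

section LocalSolutions

variable {E : Type*} [NormedAddCommGroup E] [NormedSpace ℝ E] [CompleteSpace E]
  {v : ℝ → E → E} {t₀ : ℝ} {x₀ : E}

-- A nonautonomous equation for `γ` is the autonomous system `s' = 1`, `γ' = v s γ`.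
theorem exists_isIntegralCurveAt_of_contDiffAt
    (hv : ContDiffAt ℝ 1 (uncurry v) (t₀, x₀)) :
    ∃ γ : ℝ → E, γ t₀ = x₀ ∧ IsIntegralCurveAt γ v t₀ := by
  have hsystem : ContDiffAt ℝ 1 (fun p : ℝ × E ↦ ((1 : ℝ), uncurry v p)) (t₀, x₀) :=
    contDiffAt_const.prodMk hv
  obtain ⟨α, hα₀, ε, hε, hα⟩ :=
    hsystem.exists_forall_mem_closedBall_exists_eq_forall_mem_Ioo_hasDerivAt₀ t₀
  have ht₀ : t₀ ∈ Ioo (t₀ - ε) (t₀ + ε) := by simpa using hε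
  have htime_deriv : ∀ t ∈ Ioo (t₀ - ε) (t₀ + ε), HasDerivAt (fun s ↦ (α s).1) 1 t :=
    fun t ht ↦ (hα t ht).fst
  have htime : EqOn (fun t ↦ (α t).1) id (Ioo (t₀ - ε) (t₀ + ε)) :=
    isOpen_Ioo.eqOn_of_deriv_eq isPreconnected_Ioo
      (fun t ht ↦ (htime_deriv t ht).differentiableAt.differentiableWithinAt)
      differentiableOn_id
      (fun t ht ↦ (htime_deriv t ht).deriv.trans (deriv_id t).symm) ht₀ (by simp [hα₀])
  refine ⟨fun t ↦ (α t).2, by simp [hα₀], ?_⟩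
  filter_upwards [isOpen_Ioo.mem_nhds ht₀] with t ht
  have hstate : HasDerivAt (fun s ↦ (α s).2) (v (α t).1 (α t).2) t := (hα t ht).snd
  rwa [show (α t).1 = t from htime ht] at hstate

theorem exists_Ioo_isIntegralCurve_mapsTo_graph {D : Set (ℝ × E)}
    (hD : D ∈ 𝓝 (t₀, x₀)) (hv : ContDiffAt ℝ 1 (uncurry v) (t₀, x₀)) :
    ∃ (a b : ℝ) (γ : ℝ → E), t₀ ∈ Ioo a b ∧ γ t₀ = x₀ ∧
      ∀ t ∈ Ioo a b, (t, γ t) ∈ D ∧ HasDerivAt γ (v t (γ t)) t := by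
  obtain ⟨γ, rfl, hγ⟩ := exists_isIntegralCurveAt_of_contDiffAt hv
  have hgraph : ∀ᶠ t in 𝓝 t₀, (t, γ t) ∈ D :=
    (continuousAt_id.prodMk hγ.continuousAt).eventually hD
  obtain ⟨a, b, ht₀, hab⟩ := mem_nhds_iff_exists_Ioo_subset.1 (hgraph.and hγ)
  exact ⟨a, b, γ, ht₀, rfl, hab⟩

end LocalSolutions

theorem stmt_2_general (D : Set (ℝ × ℝ)) (hD : IsOpen D)
    (φ : ℝ × ℝ → ℝ) (hφ : ContDiffOn ℝ 1 φ D)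
    (hφ_u : DifferentiableOn ℝ (uncurry (pderivU φ)) D) (κ : ℝ → ℝ → ℝ)
    (h : ∀ (a b : ℝ) (f : ℝ → ℝ),
      (∀ x ∈ Ioo a b, (x, f x) ∈ D) →
      (∀ x ∈ Ioo a b, HasDerivAt f (φ (x, f x)) x) →
      ∀ x ∈ Ioo a b,
        deriv (fun t ↦ pderivU φ t (f t)) x + pderivU φ x (f x) ^ 2 + κ x (f x) = 0)
    (x u : ℝ) (hxu : (x, u) ∈ D) : curvature φ x u = κ x u := by
  have hD_nhds : D ∈ 𝓝 (x, u) := hD.mem_nhds hxu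
  obtain ⟨a, b, f, hx, rfl, hf⟩ := exists_Ioo_isIntegralCurve_mapsTo_graph
    (v := curry φ) hD_nhds (hφ.contDiffAt hD_nhds)
  have hκ := h a b f (fun t ht ↦ (hf t ht).1) (fun t ht ↦ (hf t ht).2) x hx
  have hcurvature :=
    (hasDerivAt_pderivU_along_solution (hφ_u.differentiableAt hD_nhds) (hf x hx).2).deriv
  linarith

/-- If along every solution `f` of `u' = φ(x,u)` on any open interval the
function `p_f(x) := ∂ᵤφ(x, f(x))` satisfies `p_f' + p_f² + κ = 0`, then the curvature
satisfies `𝒦(x,u) = κ(x)` on `D`. -/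
theorem stmt_2 (D : Set (ℝ × ℝ)) (hD : IsOpen D)
    (φ : ℝ × ℝ → ℝ) (hφ : ContDiffOn ℝ 2 φ D) (κ : ℝ → ℝ)
    (h : ∀ (a b : ℝ) (f : ℝ → ℝ),
      (∀ x ∈ Set.Ioo a b, (x, f x) ∈ D) →
      (∀ x ∈ Set.Ioo a b, HasDerivAt f (φ (x, f x)) x) →
      ∀ x ∈ Set.Ioo a b,
        deriv (fun t => pderivU φ t (f t)) x + (pderivU φ x (f x)) ^ 2 + κ x = 0) :
    ∀ x u : ℝ, (x, u) ∈ D → curvature φ x u = κ x :=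
  stmt_2_general D hD φ (hφ.of_le one_le_two)
    ((contDiffOn_uncurry_pderivU hD hφ one_add_one_eq_two.le).differentiableOn one_ne_zero)
    (fun x _ ↦ κ x) h
end

section
/- Let D ⊆ ℝ × ℝ be open, φ : D → ℝ twice continuously differentiable, and κ, c : ℝ → ℝ functions. Suppose every solution f of u' = φ(x,u) on any open interval satisfies f''(x) + κ(x)·f(x) = c(x) wherever defined. Then the curvature satisfies 𝒦(x,u) = κ(x) for all (x,u) ∈ D. -/
/-!
Let `Φ := ∂ₓφ + φ · ∂ᵤφ` be the derivative of `φ` along the solutions of `u' = φ(x,u)`. A solution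
satisfies `f'' = Φ(x,f)`, and one passes through every point of `D`, so the hypothesis says that
`Φ(x,u) + κ(x)u = c(x)` on `D`. By the symmetry of second derivatives `∂ᵤΦ = -𝒦`, so differentiating
this identity in `u` leaves `-𝒦 + κ = 0`.
-/

open Filter Set Topology

section LocalSolutions

variable {E : Type*} [NormedAddCommGroup E] [NormedSpace ℝ E] {φ : ℝ × E → E} {x : ℝ} {u : E}

lemma eventuallyEq_of_eventually_hasDerivAt {f g f' : ℝ → E}
    (hf : ∀ᶠ t in 𝓝 x, HasDerivAt f (f' t) t) (hg : ∀ᶠ t in 𝓝 x, HasDerivAt g (f' t) t)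
    (hfg : f x = g x) : f =ᶠ[𝓝 x] g := by
  obtain ⟨a, b, hx, hab⟩ := mem_nhds_iff_exists_Ioo_subset.1 (hf.and hg)
  have hderiv : EqOn (deriv f) (deriv g) (Ioo a b) := fun t ht =>
    (hab ht).1.deriv.trans (hab ht).2.deriv.symm
  have heq : EqOn f g (Ioo a b) := isOpen_Ioo.eqOn_of_deriv_eq isPreconnected_Ioo
    (fun t ht => (hab ht).1.differentiableAt.differentiableWithinAt)
    (fun t ht => (hab ht).2.differentiableAt.differentiableWithinAt) hderiv hx hfg
  exact heq.eventuallyEq_of_mem (Ioo_mem_nhds hx.1 hx.2)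

-- The autonomous theorem is applied to the field `(1, φ)`, whose first component is then the time.
lemma exists_eventually_hasDerivAt_graph [CompleteSpace E] (hφ : ContDiffAt ℝ 1 φ (x, u)) :
    ∃ f : ℝ → E, f x = u ∧ ∀ᶠ t in 𝓝 x, HasDerivAt f (φ (t, f t)) t := by
  have hfield : ContDiffAt ℝ 1 (fun p : ℝ × E => ((1 : ℝ), φ p)) (x, u) :=
    contDiffAt_const.prodMk hφ
  obtain ⟨α, hαx, ε, hε, hα⟩ :=
    hfield.exists_forall_mem_closedBall_exists_eq_forall_mem_Ioo_hasDerivAt₀ x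
  have hα' : ∀ᶠ t in 𝓝 x, HasDerivAt α (1, φ (α t)) t :=
    eventually_of_mem (Ioo_mem_nhds (by linarith) (by linarith)) hα
  have hfst : (fun t => (α t).1) =ᶠ[𝓝 x] id :=
    eventuallyEq_of_eventually_hasDerivAt
      (hα'.mono fun t ht => ht.fst) (.of_forall hasDerivAt_id) (by simp [hαx])
  refine ⟨fun t => (α t).2, by simp [hαx], ?_⟩
  filter_upwards [hα', hfst] with t ht htime
  have hαt : α t = (t, (α t).2) := Prod.ext htime rfl
  exact hαt ▸ ht.snd

end LocalSolutions

section Differentiability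

variable {𝕜 E F : Type*} [NontriviallyNormedField 𝕜] [NormedAddCommGroup E] [NormedSpace 𝕜 E]
  [NormedAddCommGroup F] [NormedSpace 𝕜 F] {f : E → F} {p : E}

lemma eventually_differentiableAt_of_contDiffAt (hf : ContDiffAt 𝕜 1 f p) :
    ∀ᶠ q in 𝓝 p, DifferentiableAt 𝕜 f q :=
  (hf.eventually (by simp)).mono fun _ hq => hq.differentiableAt one_ne_zero

lemma differentiableAt_fderiv (hf : ContDiffAt 𝕜 2 f p) : DifferentiableAt 𝕜 (fderiv 𝕜 f) p :=
  (hf.fderiv_right (m := 1) le_rfl).differentiableAt one_ne_zero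

lemma fderiv_fderiv_apply_comm {n : WithTop ℕ∞} (hf : ContDiffAt 𝕜 n f p)
    (hn : minSmoothness 𝕜 2 ≤ n) (v w : E) :
    fderiv 𝕜 (fun q => fderiv 𝕜 f q v) p w = fderiv 𝕜 (fun q => fderiv 𝕜 f q w) p v := by
  have hf' : DifferentiableAt 𝕜 (fderiv 𝕜 f) p :=
    differentiableAt_fderiv (hf.of_le (le_minSmoothness.trans hn))
  have hfderiv (v w : E) :
      fderiv 𝕜 (fun q => fderiv 𝕜 f q v) p w = fderiv 𝕜 (fderiv 𝕜 f) p w v := by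
    simp [fderiv_clm_apply hf' (differentiableAt_const v)]
  rw [hfderiv, hfderiv, hf.isSymmSndFDerivAt hn w v]

end Differentiability

section PartialDerivatives

variable {φ : ℝ × ℝ → ℝ} {x u : ℝ}

lemma pderivX_eq_fderiv_apply (hφ : DifferentiableAt ℝ φ (x, u)) :
    pderivX φ x u = fderiv ℝ φ (x, u) (1, 0) :=
  (hφ.hasFDerivAt.comp_hasDerivAt x ((hasDerivAt_id x).prodMk (hasDerivAt_const x u))).deriv

lemma hasDerivAt_comp_prodMk_right_s5 (hφ : DifferentiableAt ℝ φ (x, u)) :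
    HasDerivAt (fun v => φ (x, v)) (pderivU φ x u) u :=
  (hφ.comp u (by fun_prop : DifferentiableAt ℝ (fun v => (x, v)) u)).hasDerivAt

lemma pderivU_eq_fderiv_apply (hφ : DifferentiableAt ℝ φ (x, u)) :
    pderivU φ x u = fderiv ℝ φ (x, u) (0, 1) :=
  (hφ.hasFDerivAt.comp_hasDerivAt u ((hasDerivAt_const u x).prodMk (hasDerivAt_id u))).deriv

lemma fderiv_apply_eq_pderivX_add_pderivU (hφ : DifferentiableAt ℝ φ (x, u)) (a b : ℝ) :
    fderiv ℝ φ (x, u) (a, b) = a * pderivX φ x u + b * pderivU φ x u := by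
  have hsplit : ((a, b) : ℝ × ℝ) = a • (1, 0) + b • (0, 1) := by simp
  rw [hsplit, map_add, map_smul, map_smul, pderivX_eq_fderiv_apply hφ, pderivU_eq_fderiv_apply hφ,
    smul_eq_mul, smul_eq_mul]

lemma uncurry_pderivX_eventuallyEq (hφ : ContDiffAt ℝ 1 φ (x, u)) :
    (fun p : ℝ × ℝ => pderivX φ p.1 p.2) =ᶠ[𝓝 (x, u)] fun p => fderiv ℝ φ p (1, 0) :=
  (eventually_differentiableAt_of_contDiffAt hφ).mono fun _ => pderivX_eq_fderiv_apply

lemma uncurry_pderivU_eventuallyEq (hφ : ContDiffAt ℝ 1 φ (x, u)) :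
    (fun p : ℝ × ℝ => pderivU φ p.1 p.2) =ᶠ[𝓝 (x, u)] fun p => fderiv ℝ φ p (0, 1) :=
  (eventually_differentiableAt_of_contDiffAt hφ).mono fun _ => pderivU_eq_fderiv_apply

lemma differentiableAt_uncurry_pderivX (hφ : ContDiffAt ℝ 2 φ (x, u)) :
    DifferentiableAt ℝ (fun p : ℝ × ℝ => pderivX φ p.1 p.2) (x, u) :=
  ((differentiableAt_fderiv hφ).clm_apply (differentiableAt_const _)).congr_of_eventuallyEq
    (uncurry_pderivX_eventuallyEq (hφ.of_le one_le_two))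

lemma differentiableAt_uncurry_pderivU (hφ : ContDiffAt ℝ 2 φ (x, u)) :
    DifferentiableAt ℝ (fun p : ℝ × ℝ => pderivU φ p.1 p.2) (x, u) :=
  ((differentiableAt_fderiv hφ).clm_apply (differentiableAt_const _)).congr_of_eventuallyEq
    (uncurry_pderivU_eventuallyEq (hφ.of_le one_le_two))

lemma pderivU_uncurry_pderivX (hφ : ContDiffAt ℝ 2 φ (x, u)) :
    pderivU (fun p => pderivX φ p.1 p.2) x u = pderivXU φ x u := calc
  pderivU (fun p => pderivX φ p.1 p.2) x u
    = fderiv ℝ (fun p => fderiv ℝ φ p (1, 0)) (x, u) (0, 1) := by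
      rw [pderivU_eq_fderiv_apply (differentiableAt_uncurry_pderivX hφ),
        (uncurry_pderivX_eventuallyEq (hφ.of_le one_le_two)).fderiv_eq]
  _ = fderiv ℝ (fun p => fderiv ℝ φ p (0, 1)) (x, u) (1, 0) :=
      fderiv_fderiv_apply_comm hφ (by simp) _ _
  _ = pderivX (fun p => pderivU φ p.1 p.2) x u := by
      rw [pderivX_eq_fderiv_apply (differentiableAt_uncurry_pderivU hφ),
        (uncurry_pderivU_eventuallyEq (hφ.of_le one_le_two)).fderiv_eq]

lemma hasDerivAt_pderivX (hφ : ContDiffAt ℝ 2 φ (x, u)) :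
    HasDerivAt (pderivX φ x) (pderivXU φ x u) u :=
  pderivU_uncurry_pderivX hφ ▸ hasDerivAt_comp_prodMk_right_s5 (differentiableAt_uncurry_pderivX hφ)

lemma hasDerivAt_pderivU (hφ : ContDiffAt ℝ 2 φ (x, u)) :
    HasDerivAt (pderivU φ x) (pderivUU φ x u) u :=
  hasDerivAt_comp_prodMk_right_s5 (differentiableAt_uncurry_pderivU hφ)

/-- The derivative `∂ₓφ + φ · ∂ᵤφ` of `φ` along the solutions of `u' = φ(x,u)`; it expresses the
second derivative of a solution through its value. -/
noncomputable def totalDeriv (φ : ℝ × ℝ → ℝ) (x u : ℝ) : ℝ :=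
  pderivX φ x u + φ (x, u) * pderivU φ x u

lemma deriv_deriv_eq_totalDeriv {f : ℝ → ℝ} (hφ : DifferentiableAt ℝ φ (x, f x))
    (hf : ∀ᶠ t in 𝓝 x, HasDerivAt f (φ (t, f t)) t) :
    deriv (deriv f) x = totalDeriv φ x (f x) := by
  have hderiv : deriv f =ᶠ[𝓝 x] fun t => φ (t, f t) := hf.mono fun _ ht => ht.deriv
  have hchain : HasDerivAt (fun t => φ (t, f t)) (fderiv ℝ φ (x, f x) (1, φ (x, f x))) x :=
    hφ.hasFDerivAt.comp_hasDerivAt x ((hasDerivAt_id x).prodMk hf.self_of_nhds)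
  rw [hderiv.deriv_eq, hchain.deriv, fderiv_apply_eq_pderivX_add_pderivU hφ, one_mul, totalDeriv]

lemma hasDerivAt_totalDeriv (hφ : ContDiffAt ℝ 2 φ (x, u)) :
    HasDerivAt (totalDeriv φ x) (-curvature φ x u) u := by
  have hφu := hasDerivAt_comp_prodMk_right_s5 (hφ.differentiableAt two_ne_zero)
  refine ((hasDerivAt_pderivX hφ).add
    (hφu.mul (hasDerivAt_pderivU hφ))).congr_deriv ?_
  rw [curvature]
  ring

end PartialDerivatives

/-- If every solution `f` of `u' = φ(x,u)` on any open interval satisfies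
`f'' + κ·f = c` wherever defined, then the curvature satisfies `𝒦(x,u) = κ(x)` on `D`. -/
theorem stmt_5 (D : Set (ℝ × ℝ)) (hD : IsOpen D)
    (φ : ℝ × ℝ → ℝ) (hφ : ContDiffOn ℝ 2 φ D) (κ c : ℝ → ℝ)
    (h : ∀ (a b : ℝ) (f : ℝ → ℝ),
      (∀ x ∈ Set.Ioo a b, (x, f x) ∈ D) →
      (∀ x ∈ Set.Ioo a b, HasDerivAt f (φ (x, f x)) x) →
      ∀ x ∈ Set.Ioo a b, deriv (deriv f) x + κ x * f x = c x) :
    ∀ x u : ℝ, (x, u) ∈ D → curvature φ x u = κ x := by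
  intro x u hxu
  have hΦ : ∀ v, (x, v) ∈ D → totalDeriv φ x v + κ x * v = c x := by
    intro v hxv
    have hφv : ContDiffAt ℝ 2 φ (x, v) := hφ.contDiffAt (hD.mem_nhds hxv)
    obtain ⟨f, rfl, hf⟩ := exists_eventually_hasDerivAt_graph (hφv.of_le one_le_two)
    have hfD : ∀ᶠ t in 𝓝 x, (t, f t) ∈ D :=
      (continuousAt_id.prodMk hf.self_of_nhds.continuousAt).eventually_mem (hD.mem_nhds hxv)
    obtain ⟨a, b, hx, hab⟩ := mem_nhds_iff_exists_Ioo_subset.1 (hfD.and hf)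
    rw [← deriv_deriv_eq_totalDeriv (hφv.differentiableAt two_ne_zero) hf]
    exact h a b f (fun t ht => (hab ht).1) (fun t ht => (hab ht).2) x hx
  have hnear : ∀ᶠ v in 𝓝 u, (x, v) ∈ D :=
    (Continuous.prodMk_right x).continuousAt.eventually_mem (hD.mem_nhds hxu)
  have hderiv : HasDerivAt (fun v => totalDeriv φ x v + κ x * v) (-curvature φ x u + κ x * 1) u :=
    (hasDerivAt_totalDeriv (hφ.contDiffAt (hD.mem_nhds hxu))).add
      ((hasDerivAt_id u).const_mul (κ x))
  have hconst := (hasDerivAt_const u (c x)).congr_of_eventuallyEq (hnear.mono hΦ)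
  linarith [hderiv.unique hconst]
end

section
/- Let φ(x,u) := u/(2x) + (3/(2x))·√(u² − 4x) on the open set D := {(x,u) ∈ ℝ × ℝ : x > 0, u² > 4x}. Then the curvature of the ODE u' = φ(x,u) satisfies 𝒦(x,u) = −2/x² for all (x,u) ∈ D. -/
/-- The right-hand side of the nonlinear Euler–Cauchy flow
`u' = u/(2x) + (3/(2x))·√(u² − 4x)`. -/
noncomputable def phiEC (p : ℝ × ℝ) : ℝ :=
  p.2 / (2 * p.1) + 3 / (2 * p.1) * Real.sqrt (p.2 ^ 2 - 4 * p.1)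

/-!
Write `D = ∂ₓ + φ ∂ᵤ` for the derivative along solutions of `u' = φ(x, u)`. Then
`𝒦 = -(D ∂ᵤφ + (∂ᵤφ)²)`, so any `w` with `D w = w ∂ᵤφ` satisfies the Jacobi equation
`D² w = -𝒦 w`. Such a `w` arises by differentiating a family of solutions in its parameter: the
solutions `u = c x² + 1 / (c x)` of `u' = phiEC (x, u)` give `w = √(u² - 4 x)`, up to a factor
constant along each solution, and computing `D² w` directly shows it to be a multiple of `w`.
-/

open Filter Topology

/-- The derivative `∂ₓf + φ ∂ᵤf` of `f` along the solutions of the ODE `u' = φ(x, u)`, with `f`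
regarded as a function on the plane of pairs `(x, u)`. -/
noncomputable def flowDeriv (φ f : ℝ × ℝ → ℝ) (p : ℝ × ℝ) : ℝ :=
  fderiv ℝ f p (1, φ p)

section Jacobi

variable {φ f w : ℝ × ℝ → ℝ} {x u : ℝ}

theorem flowDeriv_eq_deriv_add_mul_deriv (hf : DifferentiableAt ℝ f (x, u)) :
    flowDeriv φ f (x, u) =
      deriv (fun t => f (t, u)) x + φ (x, u) * deriv (fun v => f (x, v)) u := by
  have hX : HasDerivAt (fun t => f (t, u)) (fderiv ℝ f (x, u) (1, 0)) x :=
    hf.hasFDerivAt.comp_hasDerivAt x ((hasDerivAt_id x).prodMk (hasDerivAt_const x u))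
  have hU : HasDerivAt (fun v => f (x, v)) (fderiv ℝ f (x, u) (0, 1)) u :=
    hf.hasFDerivAt.comp_hasDerivAt u ((hasDerivAt_const u x).prodMk (hasDerivAt_id u))
  have direction : ((1, φ (x, u)) : ℝ × ℝ) = (1, 0) + φ (x, u) • (0, 1) := by simp
  rw [hX.deriv, hU.deriv, flowDeriv, direction, map_add, map_smul, smul_eq_mul]

theorem flowDeriv_div {g : ℝ × ℝ → ℝ} {p : ℝ × ℝ} (hf : DifferentiableAt ℝ f p)
    (hg : DifferentiableAt ℝ g p) (hgp : g p ≠ 0) :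
    flowDeriv φ (fun q => f q / g q) p =
      (flowDeriv φ f p * g p - f p * flowDeriv φ g p) / g p ^ 2 := by
  have hinv : HasFDerivAt (fun q => (g q)⁻¹) (-(g p ^ 2)⁻¹ • fderiv ℝ g p) p :=
    (hasDerivAt_inv hgp).comp_hasFDerivAt p hg.hasFDerivAt
  simp only [flowDeriv, div_eq_mul_inv, (hf.hasFDerivAt.fun_mul hinv).fderiv]
  simp only [add_apply, smul_apply, smul_eq_mul, neg_mul, mul_neg]
  field_simp
  ring

theorem curvature_eq_neg_flowDeriv_add_sq
    (hφ : DifferentiableAt ℝ (fun p : ℝ × ℝ => pderivU φ p.1 p.2) (x, u)) :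
    curvature φ x u =
      -(flowDeriv φ (fun p => pderivU φ p.1 p.2) (x, u) + pderivU φ x u ^ 2) := by
  rw [flowDeriv_eq_deriv_add_mul_deriv hφ, curvature, pderivXU, pderivUU]
  ring

theorem flowDeriv_flowDeriv_eq_neg_curvature_mul
    (hφ : DifferentiableAt ℝ (fun p : ℝ × ℝ => pderivU φ p.1 p.2) (x, u))
    (hw : DifferentiableAt ℝ w (x, u))
    (hflow : flowDeriv φ w =ᶠ[𝓝 (x, u)] fun p => w p * pderivU φ p.1 p.2) :
    flowDeriv φ (flowDeriv φ w) (x, u) = -curvature φ x u * w (x, u) := by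
  have product_rule : flowDeriv φ (flowDeriv φ w) (x, u) =
      w (x, u) * flowDeriv φ (fun p => pderivU φ p.1 p.2) (x, u) +
        pderivU φ x u * flowDeriv φ w (x, u) := by
    rw [flowDeriv, hflow.fderiv_eq, fderiv_fun_mul hw hφ]
    rfl
  rw [product_rule, hflow.eq_of_nhds, curvature_eq_neg_flowDeriv_add_sq hφ]
  ring

end Jacobi

/-- The square root `√(u² - a x)` in `eulerCauchyFlow a k`; it solves the linearized equation
`D w = w ∂ᵤφ`. -/
noncomputable def discrSqrt (a : ℝ) (p : ℝ × ℝ) : ℝ :=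
  √(p.2 ^ 2 - a * p.1)

/-- The right-hand sides `u / (2x) + (k / (2x)) √(u² - a x)`, a two-parameter family containing
`phiEC` as the case `a = 4`, `k = 3`. -/
noncomputable def eulerCauchyFlow (a k : ℝ) (p : ℝ × ℝ) : ℝ :=
  p.2 / (2 * p.1) + k / (2 * p.1) * discrSqrt a p

/-- An open set on which every `eulerCauchyFlow a k` is smooth. Negative `x` are allowed. -/
def eulerCauchyDomain (a : ℝ) : Set (ℝ × ℝ) :=
  {p | p.1 ≠ 0 ∧ a * p.1 < p.2 ^ 2}

section EulerCauchy

variable {a : ℝ} {p : ℝ × ℝ}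

theorem isOpen_eulerCauchyDomain (a : ℝ) : IsOpen (eulerCauchyDomain a) :=
  (isOpen_ne_fun continuous_fst continuous_const).inter
    (isOpen_lt (continuous_const.mul continuous_fst) (continuous_snd.pow 2))

theorem discrSqrt_pos (hp : p ∈ eulerCauchyDomain a) : 0 < discrSqrt a p :=
  Real.sqrt_pos.mpr (sub_pos.mpr hp.2)

theorem sq_discrSqrt (hp : p ∈ eulerCauchyDomain a) : discrSqrt a p ^ 2 = p.2 ^ 2 - a * p.1 :=
  Real.sq_sqrt (sub_pos.mpr hp.2).le

theorem differentiableAt_discrSqrt (hp : p ∈ eulerCauchyDomain a) :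
    DifferentiableAt ℝ (discrSqrt a) p :=
  DifferentiableAt.sqrt (by fun_prop) (sub_pos.mpr hp.2).ne'

theorem flowDeriv_discrSqrt (φ : ℝ × ℝ → ℝ) (hp : p ∈ eulerCauchyDomain a) :
    flowDeriv φ (discrSqrt a) p = (2 * p.2 * φ p - a) / (2 * discrSqrt a p) := by
  have h : HasFDerivAt (discrSqrt a) _ p :=
    ((hasFDerivAt_snd.pow 2).sub (hasFDerivAt_fst.const_mul a)).sqrt (sub_pos.mpr hp.2).ne'
  rw [flowDeriv, h.fderiv]
  simp only [Pi.sub_apply, one_div, mul_inv_rev, Nat.add_one_sub_one, pow_one, nsmul_eq_mul,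
    Nat.cast_ofNat, smul_apply, sub_apply, ContinuousLinearMap.coe_snd', smul_eq_mul,
    ContinuousLinearMap.coe_fst', mul_one, discrSqrt]
  ring

theorem pderivU_eulerCauchyFlow (k : ℝ) (hp : p ∈ eulerCauchyDomain a) :
    pderivU (eulerCauchyFlow a k) p.1 p.2 =
      (discrSqrt a p + k * p.2) / (2 * p.1 * discrSqrt a p) := by
  have hx : p.1 ≠ 0 := hp.1
  have hs : discrSqrt a p ≠ 0 := (discrSqrt_pos hp).ne'
  have hroot : HasDerivAt (fun v => √(v ^ 2 - a * p.1)) (2 * p.2 / (2 * discrSqrt a p)) p.2 := by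
    simpa [discrSqrt] using ((hasDerivAt_pow 2 p.2).sub_const (a * p.1)).sqrt (sub_pos.mpr hp.2).ne'
  have hφ : pderivU (eulerCauchyFlow a k) p.1 p.2 = _ :=
    (((hasDerivAt_id p.2).div_const (2 * p.1)).add (hroot.const_mul (k / (2 * p.1)))).deriv
  rw [hφ]
  field_simp

theorem differentiableAt_pderivU_eulerCauchyFlow (k : ℝ) (hp : p ∈ eulerCauchyDomain a) :
    DifferentiableAt ℝ (fun q : ℝ × ℝ => pderivU (eulerCauchyFlow a k) q.1 q.2) p := by
  have hroot := differentiableAt_discrSqrt hp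
  have hne : 2 * p.1 * discrSqrt a p ≠ 0 :=
    mul_ne_zero (mul_ne_zero two_ne_zero hp.1) (discrSqrt_pos hp).ne'
  have hquot : DifferentiableAt ℝ
      (fun q : ℝ × ℝ => (discrSqrt a q + k * q.2) / (2 * q.1 * discrSqrt a q)) p := by
    fun_prop (disch := exact hne)
  refine hquot.congr_of_eventuallyEq ?_
  filter_upwards [(isOpen_eulerCauchyDomain a).mem_nhds hp] with q hq
  exact pderivU_eulerCauchyFlow k hq

theorem flowDeriv_eulerCauchyFlow_discrSqrt (k : ℝ) (hp : p ∈ eulerCauchyDomain a) :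
    flowDeriv (eulerCauchyFlow a k) (discrSqrt a) p = (discrSqrt a p + k * p.2) / (2 * p.1) := by
  have hx : p.1 ≠ 0 := hp.1
  have hs : discrSqrt a p ≠ 0 := (discrSqrt_pos hp).ne'
  rw [flowDeriv_discrSqrt _ hp, eulerCauchyFlow]
  field_simp
  linear_combination -sq_discrSqrt hp

theorem flowDeriv_eulerCauchyFlow_discrSqrt_eq_mul_pderivU (k : ℝ)
    (hp : p ∈ eulerCauchyDomain a) :
    flowDeriv (eulerCauchyFlow a k) (discrSqrt a) p =
      discrSqrt a p * pderivU (eulerCauchyFlow a k) p.1 p.2 := by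
  have hs : discrSqrt a p ≠ 0 := (discrSqrt_pos hp).ne'
  rw [flowDeriv_eulerCauchyFlow_discrSqrt k hp, pderivU_eulerCauchyFlow k hp]
  field_simp

theorem flowDeriv_flowDeriv_eulerCauchyFlow_discrSqrt (k : ℝ) (hp : p ∈ eulerCauchyDomain a) :
    flowDeriv (eulerCauchyFlow a k) (flowDeriv (eulerCauchyFlow a k) (discrSqrt a)) p =
      (k ^ 2 - 1) / (4 * p.1 ^ 2) * discrSqrt a p := by
  set φ := eulerCauchyFlow a k with hφ
  have hx : p.1 ≠ 0 := hp.1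
  have hroot := differentiableAt_discrSqrt hp
  have hfirst : flowDeriv φ (discrSqrt a) =ᶠ[𝓝 p]
      fun q => (discrSqrt a q + k * q.2) / (2 * q.1) := by
    filter_upwards [(isOpen_eulerCauchyDomain a).mem_nhds hp] with q hq
    exact flowDeriv_eulerCauchyFlow_discrSqrt k hq
  have hnum : flowDeriv φ (fun q => discrSqrt a q + k * q.2) p =
      flowDeriv φ (discrSqrt a) p + k * φ p := by
    have h := hroot.hasFDerivAt.fun_add (hasFDerivAt_snd.const_mul k)
    rw [flowDeriv, h.fderiv]
    simp [flowDeriv]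
  have hden : flowDeriv φ (fun q => 2 * q.1) p = 2 := by
    rw [flowDeriv, (hasFDerivAt_fst.const_mul 2).fderiv]
    simp
  have quotient_rule : flowDeriv φ (flowDeriv φ (discrSqrt a)) p =
      ((flowDeriv φ (discrSqrt a) p + k * φ p) * (2 * p.1) - (discrSqrt a p + k * p.2) * 2) /
        (2 * p.1) ^ 2 := by
    rw [flowDeriv, hfirst.fderiv_eq, ← flowDeriv, flowDeriv_div (by fun_prop) (by fun_prop)
      (mul_ne_zero two_ne_zero hx), hnum, hden]
  rw [quotient_rule, flowDeriv_eulerCauchyFlow_discrSqrt k hp, hφ, eulerCauchyFlow]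
  field_simp
  ring

end EulerCauchy

theorem stmt_12_general (a k : ℝ) {x u : ℝ} (hx : x ≠ 0) (hu : a * x < u ^ 2) :
    curvature (eulerCauchyFlow a k) x u = (1 - k ^ 2) / (4 * x ^ 2) := by
  have hp : (x, u) ∈ eulerCauchyDomain a := ⟨hx, hu⟩
  have hflow : flowDeriv (eulerCauchyFlow a k) (discrSqrt a) =ᶠ[𝓝 (x, u)]
      fun q => discrSqrt a q * pderivU (eulerCauchyFlow a k) q.1 q.2 := by
    filter_upwards [(isOpen_eulerCauchyDomain a).mem_nhds hp] with q hq
    exact flowDeriv_eulerCauchyFlow_discrSqrt_eq_mul_pderivU k hq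
  have hjacobi := flowDeriv_flowDeriv_eq_neg_curvature_mul
    (differentiableAt_pderivU_eulerCauchyFlow k hp) (differentiableAt_discrSqrt hp) hflow
  rw [flowDeriv_flowDeriv_eulerCauchyFlow_discrSqrt k hp] at hjacobi
  have hcurv : (k ^ 2 - 1) / (4 * x ^ 2) = -curvature (eulerCauchyFlow a k) x u :=
    mul_right_cancel₀ (discrSqrt_pos hp).ne' hjacobi
  linear_combination hcurv

/-- On `D = {(x,u) : x > 0, u² > 4x}`, the curvature of the ODE
`u' = u/(2x) + (3/(2x))·√(u² − 4x)` equals `−2/x²`. -/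
theorem stmt_12 :
    ∀ x u : ℝ, 0 < x → 4 * x < u ^ 2 → curvature phiEC x u = -2 / x ^ 2 := by
  intro x u hx hu
  exact (stmt_12_general 4 3 hx.ne' hu).trans (by ring)
end
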